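/- (Appendix A, eq. (A.26)) Let W be a channel from 𝒳 to 𝒴, let Q_X be a pmf on 𝒳, let Q_Y be a pmf on 𝒴 and let R ≥ 0. Then a_{g_ML}(R,Q_Y) ≤ inf_{σ > 0} inf_{τ ≥ 0} inf_V { σ ( R − H(Q_X) ) + ∑_y Q_Y(y) log G(y,σ,τ,V) }, where the innermost infimum is over strictly positive pmfs V on 𝒳 and H(Q_X) = −∑_x Q_X(x) log Q_X(x). -/

import Mathlib

open Real BigOperators Filter

namespace EE

variable {𝒳 𝒴 : Type*} [Fintype 𝒳] [Fintype 𝒴]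

/-- `p` is a probability mass function on a finite type. -/
def IsPMF {α : Type*} [Fintype α] (p : α → ℝ) : Prop :=
  (∀ a, 0 ≤ p a) ∧ ∑ a, p a = 1

/-- `p` is a strictly positive probability mass function on a finite type. -/
def IsPosPMF {α : Type*} [Fintype α] (p : α → ℝ) : Prop :=
  (∀ a, 0 < p a) ∧ ∑ a, p a = 1

/-- A channel from `𝒳` to `𝒴`: every row `W (·|x)` is a strictly positive pmf on `𝒴`. -/
def IsChannel (W : 𝒳 → 𝒴 → ℝ) : Prop := ∀ x, IsPosPMF (W x)

/-- A joint pmf on `𝒳 × 𝒴`, in curried form. -/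
def IsJointPMF (Q : 𝒳 → 𝒴 → ℝ) : Prop :=
  (∀ x y, 0 ≤ Q x y) ∧ ∑ x, ∑ y, Q x y = 1

/-- A joint pmf on `𝒳 × 𝒳 × 𝒴`, in curried form. -/
def IsJointPMF3 (Q : 𝒳 → 𝒳 → 𝒴 → ℝ) : Prop :=
  (∀ x x' y, 0 ≤ Q x x' y) ∧ ∑ x, ∑ x', ∑ y, Q x x' y = 1

/-- `𝒳`-marginal of a joint pmf. -/
def margX (Q : 𝒳 → 𝒴 → ℝ) : 𝒳 → ℝ := fun x => ∑ y, Q x y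

/-- `𝒴`-marginal of a joint pmf. -/
def margY (Q : 𝒳 → 𝒴 → ℝ) : 𝒴 → ℝ := fun y => ∑ x, Q x y

/-- Shannon entropy (natural logarithm, with the convention `0 log 0 = 0`,
which holds automatically since `Real.log 0 = 0`). -/
noncomputable def ent {α : Type*} [Fintype α] (p : α → ℝ) : ℝ :=
  -∑ a, p a * Real.log (p a)

/-- Mutual information `I_Q(X;Y)` of a joint pmf `Q` on `𝒳 × 𝒴`. -/
noncomputable def mutInf (Q : 𝒳 → 𝒴 → ℝ) : ℝ :=
  ∑ x, ∑ y, Q x y * Real.log (Q x y / (margX Q x * margY Q y))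

/-- Conditional entropy `H_Q(Y|X)` of a joint pmf `Q` on `𝒳 × 𝒴`. -/
noncomputable def condEntYX (Q : 𝒳 → 𝒴 → ℝ) : ℝ :=
  -∑ x, ∑ y, Q x y * Real.log (Q x y / margX Q x)

/-- Conditional entropy `H_Q(X|Y)` of a joint pmf `Q` on `𝒳 × 𝒴`. -/
noncomputable def condEntXY (Q : 𝒳 → 𝒴 → ℝ) : ℝ :=
  -∑ x, ∑ y, Q x y * Real.log (Q x y / margY Q y)

/-- The maximum-likelihood decoding metric `g_ML(Q) = ∑ Q(x,y) log W(y|x)`. -/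
noncomputable def gML (W : 𝒳 → 𝒴 → ℝ) (Q : 𝒳 → 𝒴 → ℝ) : ℝ :=
  ∑ x, ∑ y, Q x y * Real.log (W x y)

/-- The maximum mutual information decoding metric `g_MMI(Q) = I_Q(X;Y)`. -/
noncomputable def gMMI (Q : 𝒳 → 𝒴 → ℝ) : ℝ := mutInf Q

/-- The quantity `a_g(R, Q_Y)`: the maximum of `g(Q_{X̃Y})` over joint pmfs with
`𝒳`-marginal `Q_X`, `𝒴`-marginal `Q_Y` and `I_Q(X̃;Y) ≤ R`. -/
noncomputable def aFun (g : (𝒳 → 𝒴 → ℝ) → ℝ) (QX : 𝒳 → ℝ) (R : ℝ) (QY : 𝒴 → ℝ) : ℝ :=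
  sSup {v : ℝ | ∃ Q : 𝒳 → 𝒴 → ℝ, IsJointPMF Q ∧ margX Q = QX ∧ margY Q = QY ∧
    mutInf Q ≤ R ∧ v = g Q}

/-- Joint pmf on `𝒳 × 𝒳 × 𝒴` built from `Q_{XX'}` and a conditional pmf `Q_{Y|XX'}`. -/
def jointQ (QXX' : 𝒳 → 𝒳 → ℝ) (Qc : 𝒳 → 𝒳 → 𝒴 → ℝ) : 𝒳 → 𝒳 → 𝒴 → ℝ :=
  fun x x' y => QXX' x x' * Qc x x' y

/-- Marginal `Q_{XY}` of a joint pmf on `𝒳 × 𝒳 × 𝒴`. -/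
def margXY3 (Q : 𝒳 → 𝒳 → 𝒴 → ℝ) : 𝒳 → 𝒴 → ℝ := fun x y => ∑ x', Q x x' y

/-- Marginal `Q_{X'Y}` of a joint pmf on `𝒳 × 𝒳 × 𝒴`. -/
def margX'Y3 (Q : 𝒳 → 𝒳 → 𝒴 → ℝ) : 𝒳 → 𝒴 → ℝ := fun x' y => ∑ x, Q x x' y

/-- Marginal `Q_Y` of a joint pmf on `𝒳 × 𝒳 × 𝒴`. -/
def margY3 (Q : 𝒳 → 𝒳 → 𝒴 → ℝ) : 𝒴 → ℝ := fun y => ∑ x, ∑ x', Q x x' y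

/-- Conditional entropy `H_Q(Y|X,X')` of a joint pmf on `𝒳 × 𝒳 × 𝒴`. -/
noncomputable def condEntY3 (Q : 𝒳 → 𝒳 → 𝒴 → ℝ) : ℝ :=
  -∑ x, ∑ x', ∑ y, Q x x' y * Real.log (Q x x' y / ∑ y', Q x x' y')

/-- The objective `−E_Q[log W(Y|X)] − H_Q(Y|X,X')`. -/
noncomputable def obj (W : 𝒳 → 𝒴 → ℝ) (Q : 𝒳 → 𝒳 → 𝒴 → ℝ) : ℝ :=
  (-∑ x, ∑ x', ∑ y, Q x x' y * Real.log (W x y)) - condEntY3 Q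

/-- `Γ_g(Q_{XX'}, R)`: the infimum of `−E_Q[log W(Y|X)] − H_Q(Y|X,X')` over conditional
pmfs `Q_{Y|XX'}` satisfying `g(Q_{X'Y}) ≥ max (g(Q_{XY})) (a_g(R,Q_Y))`, as an
extended real, with `inf ∅ = +∞`. -/
noncomputable def Gamma (W : 𝒳 → 𝒴 → ℝ) (g : (𝒳 → 𝒴 → ℝ) → ℝ) (QX : 𝒳 → ℝ)
    (R : ℝ) (QXX' : 𝒳 → 𝒳 → ℝ) : EReal :=
  sInf {v : EReal | ∃ Qc : 𝒳 → 𝒳 → 𝒴 → ℝ, (∀ x x', IsPMF (Qc x x')) ∧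
    max (g (margXY3 (jointQ QXX' Qc))) (aFun g QX R (margY3 (jointQ QXX' Qc)))
      ≤ g (margX'Y3 (jointQ QXX' Qc)) ∧
    v = ((obj W (jointQ QXX' Qc) : ℝ) : EReal)}

/-- The single-letter TRC exponent `E_trc^g(R, Q_X)`. -/
noncomputable def Etrc (W : 𝒳 → 𝒴 → ℝ) (g : (𝒳 → 𝒴 → ℝ) → ℝ) (QX : 𝒳 → ℝ)
    (R : ℝ) : EReal :=
  sInf {v : EReal | ∃ QXX' : 𝒳 → 𝒳 → ℝ, IsJointPMF QXX' ∧ margX QXX' = QX ∧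
    margY QXX' = QX ∧ mutInf QXX' ≤ 2 * R ∧
    v = Gamma W g QX R QXX' + ((mutInf QXX' : ℝ) : EReal) - ((R : ℝ) : EReal)}

/-- The single-letter expurgated exponent `E_ex^g(R, Q_X)`. -/
noncomputable def Eex (W : 𝒳 → 𝒴 → ℝ) (g : (𝒳 → 𝒴 → ℝ) → ℝ) (QX : 𝒳 → ℝ)
    (R : ℝ) : EReal :=
  sInf {v : EReal | ∃ QXX' : 𝒳 → 𝒳 → ℝ, IsJointPMF QXX' ∧ margX QXX' = QX ∧
    margY QXX' = QX ∧ mutInf QXX' ≤ R ∧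
    v = Gamma W g QX R QXX' + ((mutInf QXX' : ℝ) : EReal) - ((R : ℝ) : EReal)}

/-- `Λ(Q_{XX'})`. -/
noncomputable def Lambda (W : 𝒳 → 𝒴 → ℝ) (QXX' : 𝒳 → 𝒳 → ℝ) : EReal :=
  ⨆ μ : {μ : ℝ // 0 ≤ μ}, ⨅ Qc : {Qc : 𝒳 → 𝒳 → 𝒴 → ℝ // ∀ x x', IsPMF (Qc x x')},
    ((obj W (jointQ QXX' Qc.1) + μ.1 * (mutInf (margXY3 (jointQ QXX' Qc.1)) -
      mutInf (margX'Y3 (jointQ QXX' Qc.1))) : ℝ) : EReal)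

/-- `Φ(Q_{XX'}, R)`. -/
noncomputable def Phi (W : 𝒳 → 𝒴 → ℝ) (QXX' : 𝒳 → 𝒳 → ℝ) (R : ℝ) : EReal :=
  ⨆ μ : {μ : ℝ // 0 ≤ μ}, ⨅ Qc : {Qc : 𝒳 → 𝒳 → 𝒴 → ℝ // ∀ x x', IsPMF (Qc x x')},
    ((obj W (jointQ QXX' Qc.1) + μ.1 * (R - mutInf (margX'Y3 (jointQ QXX' Qc.1))) : ℝ) : EReal)

/-- `Ψ(Q_{XX'})`. -/
noncomputable def Psi (W : 𝒳 → 𝒴 → ℝ) (QXX' : 𝒳 → 𝒳 → ℝ) : EReal :=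
  ⨆ s : {s : ℝ // 0 ≤ s},
    ((-∑ x, ∑ x', QXX' x x' * Real.log (∑ y, W x y ^ (1 - s.1) * W x' y ^ s.1) : ℝ) : EReal)

/-- `G(y, σ, τ, V)`. -/
noncomputable def Gfun (W : 𝒳 → 𝒴 → ℝ) (QX : 𝒳 → ℝ) (y : 𝒴) (σ τ : ℝ)
    (V : 𝒳 → ℝ) : ℝ :=
  (∑ x, W x y ^ (1 / σ) * QX x ^ (τ / σ) * V x ^ (-(τ / σ))) ^ σ

/-- `Θ(Q_{XX'}, R)`. -/
noncomputable def Theta (W : 𝒳 → 𝒴 → ℝ) (QX : 𝒳 → ℝ) (QXX' : 𝒳 → 𝒳 → ℝ)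
    (R : ℝ) : EReal :=
  ⨆ ρ : {ρ : ℝ // 0 ≤ ρ}, ⨅ σ : {σ : ℝ // 0 < σ}, ⨅ τ : {τ : ℝ // 0 ≤ τ},
    ⨅ V : {V : 𝒳 → ℝ // IsPosPMF V},
    ((ρ.1 * σ.1 * (R - ent QX) - ∑ x, ∑ x', QXX' x x' *
      Real.log (∑ y, W x y * W x' y ^ ρ.1 * Gfun W QX y σ.1 τ.1 V.1 ^ (-ρ.1)) : ℝ) : EReal)

/-!
Fix `y`. By the log-sum inequality, every `f ≥ 0` satisfies
`∑ₓ Q(x,y) log f(x,y) - ∑ₓ Q(x,y) log Q(x|y) ≤ Q_Y(y) log ∑ₓ f(x,y)`; summing over `y` gives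
`E_Q[log f] + H_Q(X|Y) ≤ E_Q[log ∑ₓ f(x,Y)]`. The bound is this inequality multiplied by `σ`, for
`f = W^{1/σ} Q_X^{τ/σ} V^{-τ/σ}`: then `∑ₓ f(x,y) = G(y,σ,τ,V)^{1/σ}`,
`H_Q(X|Y) = H(Q_X) - I_Q(X;Y) ≥ H(Q_X) - R`, and
`σ E_Q[log f] = E_Q[log W] + τ D(Q_X‖V) ≥ E_Q[log W]` by Gibbs' inequality.
-/

section LogSum

variable {ι : Type*} {s : Finset ι} {a b : ι → ℝ}

/-- **Log-sum inequality**: Jensen for `t ↦ t log t` with weights `b i` at the points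
`a i / b i`. -/
lemma sum_mul_log_sum_div_sum_le (ha : ∀ i ∈ s, 0 ≤ a i) (hb : ∀ i ∈ s, 0 ≤ b i)
    (hab : ∀ i ∈ s, b i = 0 → a i = 0) :
    (∑ i ∈ s, a i) * log ((∑ i ∈ s, a i) / ∑ i ∈ s, b i) ≤
      ∑ i ∈ s, a i * log (a i / b i) := by
  have hcancel : ∀ i ∈ s, b i * (a i / b i) = a i := fun i hi =>
    mul_div_cancel_of_imp' (hab i hi)
  rcases (Finset.sum_nonneg hb).eq_or_lt with hB | hB
  · have ha0 : ∀ i ∈ s, a i = 0 := fun i hi =>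
      hab i hi ((Finset.sum_eq_zero_iff_of_nonneg hb).1 hB.symm i hi)
    rw [Finset.sum_eq_zero ha0, zero_mul, Finset.sum_eq_zero fun i hi => by rw [ha0 i hi, zero_mul]]
  · have hvalues : ∑ i ∈ s, b i * (a i / b i) * log (a i / b i) = ∑ i ∈ s, a i * log (a i / b i) :=
      Finset.sum_congr rfl fun i hi => by rw [hcancel i hi]
    have hjensen := convexOn_mul_log.map_centerMass_le hb hB
      fun i hi => div_nonneg (ha i hi) (hb i hi)
    simp only [Finset.centerMass, Function.comp_def, smul_eq_mul, ← mul_assoc] at hjensen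
    rw [Finset.sum_congr rfl hcancel, hvalues, mul_assoc,
      mul_le_mul_iff_right₀ (inv_pos.2 hB), inv_mul_eq_div] at hjensen
    exact hjensen

lemma sum_mul_log_div_nonneg (ha : ∀ i ∈ s, 0 ≤ a i) (hb : ∀ i ∈ s, 0 ≤ b i)
    (hab : ∀ i ∈ s, b i = 0 → a i = 0) (hsum : ∑ i ∈ s, a i = ∑ i ∈ s, b i) :
    0 ≤ ∑ i ∈ s, a i * log (a i / b i) := by
  have hlogsum := sum_mul_log_sum_div_sum_le ha hb hab
  rwa [← hsum, log_div_self, mul_zero] at hlogsum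

lemma sum_mul_log_sub_mul_log_div_sum_le (ha : ∀ i ∈ s, 0 ≤ a i) (hb : ∀ i ∈ s, 0 ≤ b i)
    (hab : ∀ i ∈ s, b i = 0 → a i = 0) :
    ∑ i ∈ s, (a i * log (b i) - a i * log (a i / ∑ j ∈ s, a j)) ≤
      (∑ i ∈ s, a i) * log (∑ i ∈ s, b i) := by
  have ha0 : ∑ j ∈ s, a j = 0 → ∀ i ∈ s, a i = 0 := (Finset.sum_eq_zero_iff_of_nonneg ha).1
  have hb0 : ∑ j ∈ s, b j = 0 → ∑ j ∈ s, a j = 0 := fun hB =>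
    Finset.sum_eq_zero fun i hi => hab i hi ((Finset.sum_eq_zero_iff_of_nonneg hb).1 hB i hi)
  have hterm : ∀ i ∈ s, a i * log (b i) - a i * log (a i / ∑ j ∈ s, a j) =
      a i * log (∑ j ∈ s, a j) - a i * log (a i / b i) := by
    intro i hi
    by_cases hai : a i = 0
    · simp [hai]
    rw [log_div hai fun hA => hai (ha0 hA i hi), log_div hai fun h => hai (hab i hi h)]
    ring
  have hlog : (∑ i ∈ s, a i) * log ((∑ i ∈ s, a i) / ∑ i ∈ s, b i) =
      (∑ i ∈ s, a i) * log (∑ i ∈ s, a i) - (∑ i ∈ s, a i) * log (∑ i ∈ s, b i) := by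
    by_cases hA : ∑ i ∈ s, a i = 0
    · simp [hA]
    rw [log_div hA fun hB => hA (hb0 hB), mul_sub]
  rw [Finset.sum_congr rfl hterm, Finset.sum_sub_distrib, ← Finset.sum_mul, sub_le_comm, ← hlog]
  exact sum_mul_log_sum_div_sum_le ha hb hab

end LogSum

section Marginals

variable {Q : 𝒳 → 𝒴 → ℝ}

omit [Fintype 𝒳] in
lemma eq_zero_of_margX_eq_zero (hQ : ∀ x y, 0 ≤ Q x y) {x : 𝒳} (hx : margX Q x = 0) (y : 𝒴) :
    Q x y = 0 :=
  (Finset.sum_eq_zero_iff_of_nonneg fun y _ => hQ x y).1 hx y (Finset.mem_univ y)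

omit [Fintype 𝒴] in
lemma eq_zero_of_margY_eq_zero (hQ : ∀ x y, 0 ≤ Q x y) {y : 𝒴} (hy : margY Q y = 0) (x : 𝒳) :
    Q x y = 0 :=
  (Finset.sum_eq_zero_iff_of_nonneg fun x _ => hQ x y).1 hy x (Finset.mem_univ x)

lemma sum_sum_mul_eq_sum_margX_mul (Q : 𝒳 → 𝒴 → ℝ) (u : 𝒳 → ℝ) :
    ∑ x, ∑ y, Q x y * u x = ∑ x, margX Q x * u x := by
  simp only [margX, Finset.sum_mul]

lemma IsJointPMF.isPMF_margX (hQ : IsJointPMF Q) : IsPMF (margX Q) :=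
  ⟨fun x => Finset.sum_nonneg fun y _ => hQ.1 x y, hQ.2⟩

lemma condEntXY_eq_ent_sub_mutInf (hQ : ∀ x y, 0 ≤ Q x y) :
    condEntXY Q = ent (margX Q) - mutInf Q := by
  have hterm : ∀ x y, Q x y * log (Q x y / (margX Q x * margY Q y)) =
      Q x y * log (Q x y / margY Q y) - Q x y * log (margX Q x) := by
    intro x y
    by_cases hxy : Q x y = 0
    · simp [hxy]
    have hx : margX Q x ≠ 0 := fun h => hxy (eq_zero_of_margX_eq_zero hQ h y)
    have hy : margY Q y ≠ 0 := fun h => hxy (eq_zero_of_margY_eq_zero hQ h x)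
    rw [mul_comm (margX Q x), ← div_div, log_div (div_ne_zero hxy hy) hx, mul_sub]
  simp only [condEntXY, ent, mutInf, hterm, Finset.sum_sub_distrib, sum_sum_mul_eq_sum_margX_mul]
  ring

lemma gML_add_condEntXY_le {f : 𝒳 → 𝒴 → ℝ} (hQ : ∀ x y, 0 ≤ Q x y) (hf : ∀ x y, 0 ≤ f x y)
    (hfQ : ∀ x y, f x y = 0 → Q x y = 0) :
    gML f Q + condEntXY Q ≤ ∑ y, margY Q y * log (∑ x, f x y) := by
  calc gML f Q + condEntXY Q
      = ∑ y, ∑ x, (Q x y * log (f x y) - Q x y * log (Q x y / margY Q y)) := by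
        rw [Finset.sum_comm]
        simp only [gML, condEntXY, Finset.sum_sub_distrib, ← sub_eq_add_neg]
    _ ≤ ∑ y, margY Q y * log (∑ x, f x y) := Finset.sum_le_sum fun y _ =>
        sum_mul_log_sub_mul_log_div_sum_le (fun x _ => hQ x y) (fun x _ => hf x y)
          fun x _ => hfQ x y

end Marginals

section Tilting

variable {W Q : 𝒳 → 𝒴 → ℝ} {P V : 𝒳 → ℝ} {σ τ : ℝ}

/-- The tilted metric `W(y|x)^{1/σ} P(x)^{τ/σ} V(x)^{-τ/σ}`, the summand of `G(y,σ,τ,V)` for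
`Q_X = P`. -/
noncomputable def tiltedMetric (W : 𝒳 → 𝒴 → ℝ) (P V : 𝒳 → ℝ) (σ τ : ℝ) : 𝒳 → 𝒴 → ℝ :=
  fun x y => W x y ^ (1 / σ) * P x ^ (τ / σ) * V x ^ (-(τ / σ))

section Pointwise

omit [Fintype 𝒳] [Fintype 𝒴]

lemma tiltedMetric_nonneg (hW : ∀ x y, 0 ≤ W x y) (hP : ∀ x, 0 ≤ P x) (hV : ∀ x, 0 ≤ V x)
    (x : 𝒳) (y : 𝒴) : 0 ≤ tiltedMetric W P V σ τ x y :=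
  mul_nonneg (mul_nonneg (rpow_nonneg (hW x y) _) (rpow_nonneg (hP x) _)) (rpow_nonneg (hV x) _)

lemma tiltedMetric_pos {x : 𝒳} {y : 𝒴} (hW : 0 < W x y) (hP : 0 < P x) (hV : 0 < V x) :
    0 < tiltedMetric W P V σ τ x y :=
  mul_pos (mul_pos (rpow_pos_of_pos hW _) (rpow_pos_of_pos hP _)) (rpow_pos_of_pos hV _)

lemma mul_log_tiltedMetric {x : 𝒳} {y : 𝒴} (hσ : σ ≠ 0) (hW : 0 < W x y) (hP : 0 < P x)
    (hV : 0 < V x) :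
    σ * log (tiltedMetric W P V σ τ x y) = log (W x y) + τ * log (P x / V x) := by
  have hWσ := rpow_pos_of_pos hW (1 / σ)
  have hPσ := rpow_pos_of_pos hP (τ / σ)
  have hVσ := rpow_pos_of_pos hV (-(τ / σ))
  rw [tiltedMetric, log_mul (mul_pos hWσ hPσ).ne' hVσ.ne', log_mul hWσ.ne' hPσ.ne', log_rpow hW,
    log_rpow hP, log_rpow hV, log_div hP.ne' hV.ne']
  field_simp
  ring

end Pointwise

omit [Fintype 𝒴] in
lemma log_Gfun (hσ : σ ≠ 0) (hW : ∀ x y, 0 ≤ W x y) (hP : ∀ x, 0 ≤ P x) (hV : ∀ x, 0 ≤ V x)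
    (y : 𝒴) : log (Gfun W P y σ τ V) = σ * log (∑ x, tiltedMetric W P V σ τ x y) := by
  change log ((∑ x, tiltedMetric W P V σ τ x y) ^ σ) = _
  rcases (Finset.sum_nonneg fun x _ =>
    tiltedMetric_nonneg (σ := σ) (τ := τ) hW hP hV x y).eq_or_lt with hS | hS
  · rw [← hS, zero_rpow hσ, log_zero, mul_zero]
  · exact log_rpow hS σ

lemma gML_le_mul_gML_tiltedMetric (hW : ∀ x y, 0 < W x y) (hQ : IsJointPMF Q) (hV : IsPosPMF V)
    (hσ : σ ≠ 0) (hτ : 0 ≤ τ) : gML W Q ≤ σ * gML (tiltedMetric W (margX Q) V σ τ) Q := by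
  have hterm : ∀ x y, σ * (Q x y * log (tiltedMetric W (margX Q) V σ τ x y)) =
      Q x y * log (W x y) + Q x y * (τ * log (margX Q x / V x)) := by
    intro x y
    by_cases hxy : Q x y = 0
    · simp [hxy]
    have hx : 0 < margX Q x := (hQ.isPMF_margX.1 x).lt_of_ne' fun h =>
      hxy (eq_zero_of_margX_eq_zero hQ.1 h y)
    rw [mul_left_comm, mul_log_tiltedMetric hσ (hW x y) hx (hV.1 x), mul_add]
  have hgibbs : 0 ≤ ∑ x, margX Q x * log (margX Q x / V x) :=
    sum_mul_log_div_nonneg (fun x _ => hQ.isPMF_margX.1 x) (fun x _ => (hV.1 x).le)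
      (fun x _ h => absurd h (hV.1 x).ne') (hQ.isPMF_margX.2.trans hV.2.symm)
  have hsplit : σ * gML (tiltedMetric W (margX Q) V σ τ) Q =
      gML W Q + τ * ∑ x, margX Q x * log (margX Q x / V x) := by
    simp only [gML, Finset.mul_sum, hterm, Finset.sum_add_distrib, sum_sum_mul_eq_sum_margX_mul,
      mul_left_comm τ]
  exact hsplit ▸ le_add_of_nonneg_right (mul_nonneg hτ hgibbs)

lemma gML_le_mul_mutInf_sub_ent_add (hW : ∀ x y, 0 < W x y) (hQ : IsJointPMF Q)
    (hV : IsPosPMF V) (hσ : 0 < σ) (hτ : 0 ≤ τ) :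
    gML W Q ≤ σ * (mutInf Q - ent (margX Q)) +
      ∑ y, margY Q y * log (Gfun W (margX Q) y σ τ V) := by
  have hW₀ : ∀ x y, 0 ≤ W x y := fun x y => (hW x y).le
  have hV₀ : ∀ x, 0 ≤ V x := fun x => (hV.1 x).le
  set f := tiltedMetric W (margX Q) V σ τ with hf
  have hfQ : ∀ x y, f x y = 0 → Q x y = 0 := fun x y hxy =>
    eq_zero_of_margX_eq_zero hQ.1 (by_contra fun hx =>
      (tiltedMetric_pos (hW x y) ((hQ.isPMF_margX.1 x).lt_of_ne' hx) (hV.1 x)).ne' hxy) y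
  have hvar := gML_add_condEntXY_le hQ.1 (tiltedMetric_nonneg hW₀ hQ.isPMF_margX.1 hV₀) hfQ
  calc gML W Q
      ≤ σ * gML f Q := gML_le_mul_gML_tiltedMetric hW hQ hV hσ.ne' hτ
    _ ≤ σ * (∑ y, margY Q y * log (∑ x, f x y) - condEntXY Q) :=
        mul_le_mul_of_nonneg_left (le_sub_iff_add_le.2 hvar) hσ.le
    _ = σ * (mutInf Q - ent (margX Q)) + ∑ y, margY Q y * log (Gfun W (margX Q) y σ τ V) := by
        simp only [condEntXY_eq_ent_sub_mutInf hQ.1, log_Gfun hσ.ne' hW₀ hQ.isPMF_margX.1 hV₀,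
          mul_left_comm _ σ, ← Finset.mul_sum, ← hf]
        ring

end Tilting

section Product

variable {p : 𝒳 → ℝ} {q : 𝒴 → ℝ}

omit [Fintype 𝒳] in
lemma margX_mul (p : 𝒳 → ℝ) (hq : ∑ y, q y = 1) : margX (fun x y => p x * q y) = p := by
  funext x
  rw [margX, ← Finset.mul_sum, hq, mul_one]

omit [Fintype 𝒴] in
lemma margY_mul (hp : ∑ x, p x = 1) (q : 𝒴 → ℝ) : margY (fun x y => p x * q y) = q := by
  funext y
  rw [margY, ← Finset.sum_mul, hp, one_mul]

lemma IsPMF.isJointPMF_mul (hp : IsPMF p) (hq : IsPMF q) : IsJointPMF fun x y => p x * q y :=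
  ⟨fun x y => mul_nonneg (hp.1 x) (hq.1 y), by
    rw [← Finset.sum_mul_sum, hp.2, hq.2, one_mul]⟩

lemma mutInf_mul (hp : ∑ x, p x = 1) (hq : ∑ y, q y = 1) :
    mutInf (fun x y => p x * q y) = 0 := by
  simp only [mutInf, margX_mul p hq, margY_mul hp q, log_div_self, mul_zero,
    Finset.sum_const_zero]

end Product

theorem aML_upper_bound_G_general (W : 𝒳 → 𝒴 → ℝ) (hW : ∀ x y, 0 < W x y)
    (QX : 𝒳 → ℝ) (hQX : IsPMF QX) (QY : 𝒴 → ℝ) (hQY : IsPMF QY) (R : ℝ) (hR : 0 ≤ R) :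
    ((aFun (gML W) QX R QY : ℝ) : EReal) ≤
      ⨅ σ : {σ : ℝ // 0 < σ}, ⨅ τ : {τ : ℝ // 0 ≤ τ}, ⨅ V : {V : 𝒳 → ℝ // IsPosPMF V},
        ((σ.1 * (R - ent QX)
          + ∑ y, QY y * Real.log (Gfun W QX y σ.1 τ.1 V.1) : ℝ) : EReal) := by
  refine le_iInf fun ⟨σ, hσ⟩ => le_iInf fun ⟨τ, hτ⟩ => le_iInf fun ⟨V, hV⟩ =>
    EReal.coe_le_coe_iff.2 <| csSup_le ?_ ?_
  -- The supremum of an empty set of reals would be `0`; the product law is always admissible.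
  · exact ⟨_, _, hQX.isJointPMF_mul hQY, margX_mul QX hQY.2, margY_mul hQX.2 QY,
      (mutInf_mul hQX.2 hQY.2).trans_le hR, rfl⟩
  · rintro _ ⟨Q, hQ, rfl, rfl, hI, rfl⟩
    refine (gML_le_mul_mutInf_sub_ent_add hW hQ hV hσ hτ).trans ?_
    gcongr

/-- **Appendix A, eq. (A.26):** an upper bound on `a_{g_ML}(R,Q_Y)` in terms of the
function `G(y,σ,τ,V)`. -/
theorem aML_upper_bound_G {𝒳 𝒴 : Type*} [Fintype 𝒳] [Fintype 𝒴]
    [Nonempty 𝒳] [Nonempty 𝒴]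
    (W : 𝒳 → 𝒴 → ℝ) (hW : IsChannel W)
    (QX : 𝒳 → ℝ) (hQX : IsPMF QX) (QY : 𝒴 → ℝ) (hQY : IsPMF QY) (R : ℝ) (hR : 0 ≤ R) :
    ((aFun (gML W) QX R QY : ℝ) : EReal) ≤
      ⨅ σ : {σ : ℝ // 0 < σ}, ⨅ τ : {τ : ℝ // 0 ≤ τ}, ⨅ V : {V : 𝒳 → ℝ // IsPosPMF V},
        ((σ.1 * (R - ent QX)
          + ∑ y, QY y * Real.log (Gfun W QX y σ.1 τ.1 V.1) : ℝ) : EReal) := by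
  exact aML_upper_bound_G_general W (fun x => (hW x).1) QX hQX QY hQY R hR

end EE
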